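/- Consider the IQN setup and iteration, and assume additionally x^t ≠ x* for all t. There exist positive constants ε and δ such that: if ‖x⁰ − x*‖ < ε and ‖B_i⁰ − ∇²f_i(x*)‖_{M_i} < δ for M_i = ∇²f_i(x*)^{−1/2} and every i = 1,…,n, then the residual sequence is mean-superlinearly convergent: lim_{t→∞} ‖x^t − x*‖ / [ (1/n)(‖x^{t−1} − x*‖ + ‖x^{t−2} − x*‖ + … + ‖x^{t−n} − x*‖) ] = 0 (the limit taken over t ≥ n). -/

import Mathlib

open Matrix Filter RealInnerProductSpace

noncomputable section

abbrev Vec (p : ℕ) := EuclideanSpace ℝ (Fin p)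
abbrev Mat (p : ℕ) := Matrix (Fin p) (Fin p) ℝ

/-- A matrix acting on Euclidean space as a linear map. -/
def applyM {p : ℕ} (A : Mat p) (v : Vec p) : Vec p := Matrix.toEuclideanCLM (𝕜 := ℝ) A v

/-- Operator norm of a matrix induced by the Euclidean vector norm. -/
def opNorm {p : ℕ} (A : Mat p) : ℝ := ‖Matrix.toEuclideanCLM (𝕜 := ℝ) A‖

/-- Frobenius norm of a matrix. -/
def frobNorm {p : ℕ} (A : Mat p) : ℝ := Real.sqrt (∑ i, ∑ j, (A i j)^2)

/-- Weighted matrix norm ‖A‖_M = ‖M A M‖_F. -/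
def wNorm {p : ℕ} (M A : Mat p) : ℝ := frobNorm (M * A * M)

/-- Underlying function of a Euclidean vector. -/
def toFn {p : ℕ} (v : Vec p) : Fin p → ℝ := (WithLp.equiv 2 (Fin p → ℝ)) v

/-- Outer product a bᵀ. -/
def outer {p : ℕ} (a b : Vec p) : Mat p := Matrix.vecMulVec (toFn a) (toFn b)

/-- Bilinear form uᵀ B v. -/
def quadForm {p : ℕ} (B : Mat p) (u v : Vec p) : ℝ := toFn u ⬝ᵥ B.mulVec (toFn v)

/-- Dot product aᵀ b. -/
def dotV {p : ℕ} (a b : Vec p) : ℝ := toFn a ⬝ᵥ toFn b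

/-- The BFGS update  B⁺ = B + yyᵀ/(yᵀs) − B s sᵀ B/(sᵀ B s). -/
def bfgsUpdate {p : ℕ} (B : Mat p) (s y : Vec p) : Mat p :=
  B + (dotV y s)⁻¹ • outer y y - (quadForm B s s)⁻¹ • (B * outer s s * B)

/-- `H` is the Hessian (matrix of second derivatives) of `g`. -/
def HasHessian {p : ℕ} (g : Vec p → ℝ) (H : Vec p → Mat p) : Prop :=
  ∀ x, HasFDerivAt (gradient g) (Matrix.toEuclideanCLM (𝕜 := ℝ) (H x) : Vec p →L[ℝ] Vec p) x

/-- The cyclic index `i_t = (t mod n) + 1` (0-indexed: `t mod n`). -/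
def cyc {n : ℕ} (hn : 1 ≤ n) (t : ℕ) : Fin n := ⟨t % n, Nat.mod_lt t hn⟩

/-- The IQN problem data: `n` twice continuously differentiable sample functions
`f i : ℝ^p → ℝ`, `μ`-strongly convex with `L`-Lipschitz gradients and `L̃`-Lipschitz
Hessians, and the optimizer `x*` of `f = (1/n) Σ f i`. -/
structure IQNProblem (p n : ℕ) where
  hp : 1 ≤ p
  hn : 1 ≤ n
  f : Fin n → Vec p → ℝ
  Hess : Fin n → Vec p → Mat p
  mu : ℝ
  Lg : ℝ
  Ltil : ℝ
  xstar : Vec p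
  hmu : 0 < mu
  hmuL : mu ≤ Lg
  hLtil : 0 < Ltil
  hC2 : ∀ i, ContDiff ℝ 2 (f i)
  hHess : ∀ i, HasHessian (f i) (Hess i)
  hlow : ∀ i, ∀ x xh : Vec p,
    mu * ‖x - xh‖^2 ≤ ⟪gradient (f i) x - gradient (f i) xh, x - xh⟫
  hup : ∀ i, ∀ x xh : Vec p,
    ⟪gradient (f i) x - gradient (f i) xh, x - xh⟫ ≤ Lg * ‖x - xh‖^2
  hLip : ∀ i, ∀ u v : Vec p, opNorm (Hess i u - Hess i v) ≤ Ltil * ‖u - v‖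
  hopt : gradient (fun x => (n : ℝ)⁻¹ * ∑ i, f i x) xstar = 0
  hmin : ∀ x : Vec p, (n : ℝ)⁻¹ * ∑ i, f i xstar ≤ (n : ℝ)⁻¹ * ∑ i, f i x

/-- A run of the IQN iteration: sequences `x^t`, `z_i^t` and symmetric matrices `B_i^t`
following the IQN update with cyclic index, all steps assumed well defined. -/
structure IQNState {p n : ℕ} (P : IQNProblem p n) where
  x : ℕ → Vec p
  z : Fin n → ℕ → Vec p
  B : Fin n → ℕ → Mat p
  hz0 : ∀ i, z i 0 = x 0
  hsym : ∀ i t, (B i t).IsSymm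
  hinv : ∀ t, IsUnit ((n : ℝ)⁻¹ • ∑ i, B i t)
  hx : ∀ t, x (t+1) = applyM ((n : ℝ)⁻¹ • ∑ i, B i t)⁻¹
      ((n : ℝ)⁻¹ • ∑ i, applyM (B i t) (z i t) - (n : ℝ)⁻¹ • ∑ i, gradient (P.f i) (z i t))
  hzupd : ∀ t, z (cyc P.hn t) (t+1) = x (t+1)
  hzfix : ∀ t, ∀ j, j ≠ cyc P.hn t → z j (t+1) = z j t
  hs : ∀ t, z (cyc P.hn t) (t+1) - z (cyc P.hn t) t ≠ 0
  hys : ∀ t, dotV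
      (gradient (P.f (cyc P.hn t)) (z (cyc P.hn t) (t+1)) -
        gradient (P.f (cyc P.hn t)) (z (cyc P.hn t) t))
      (z (cyc P.hn t) (t+1) - z (cyc P.hn t) t) ≠ 0
  hsBs : ∀ t, quadForm (B (cyc P.hn t) t)
      (z (cyc P.hn t) (t+1) - z (cyc P.hn t) t)
      (z (cyc P.hn t) (t+1) - z (cyc P.hn t) t) ≠ 0
  hBupd : ∀ t, B (cyc P.hn t) (t+1) = bfgsUpdate (B (cyc P.hn t) t)
      (z (cyc P.hn t) (t+1) - z (cyc P.hn t) t)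
      (gradient (P.f (cyc P.hn t)) (z (cyc P.hn t) (t+1)) -
        gradient (P.f (cyc P.hn t)) (z (cyc P.hn t) t))
  hBfix : ∀ t, ∀ j, j ≠ cyc P.hn t → B j (t+1) = B j t

/-- Frobenius inner product. -/
def fip {p : ℕ} (A B : Mat p) : ℝ := ∑ i, ∑ j, A i j * B i j

def fv {p : ℕ} (A : Mat p) : ℝ := fip A A

lemma fv_nonneg {p : ℕ} (A : Mat p) : 0 ≤ fv A := by
  unfold fv fip
  exact Finset.sum_nonneg fun i _ => Finset.sum_nonneg fun j _ => mul_self_nonneg _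

lemma fip_add_left {p : ℕ} (A B C : Mat p) : fip (A + B) C = fip A C + fip B C := by
  simp [fip, add_mul, Finset.sum_add_distrib]

lemma fip_smul_left {p : ℕ} (a : ℝ) (A C : Mat p) : fip (a • A) C = a * fip A C := by
  simp [fip, Finset.mul_sum, mul_assoc]

lemma fip_comm {p : ℕ} (A C : Mat p) : fip A C = fip C A := by
  simp [fip, mul_comm]

lemma fip_add_right {p : ℕ} (A B C : Mat p) : fip C (A + B) = fip C A + fip C B := by
  rw [fip_comm, fip_add_left, fip_comm A, fip_comm B]

lemma fip_smul_right {p : ℕ} (a : ℝ) (A C : Mat p) : fip C (a • A) = a * fip C A := by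
  rw [fip_comm, fip_smul_left, fip_comm]

lemma fip_vec {p : ℕ} (A : Mat p) (u v : Fin p → ℝ) :
    fip A (vecMulVec u v) = u ⬝ᵥ A *ᵥ v := by
  simp only [fip, vecMulVec_apply, dotProduct, mulVec, Finset.mul_sum]
  refine Finset.sum_congr rfl fun i _ => Finset.sum_congr rfl fun j _ => by ring

lemma fip_vec_vec {p : ℕ} (u v a b : Fin p → ℝ) :
    fip (vecMulVec a b) (vecMulVec u v) = (u ⬝ᵥ a) * (v ⬝ᵥ b) := by
  simp only [fip, vecMulVec_apply, dotProduct, Finset.sum_mul_sum]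
  refine Finset.sum_congr rfl fun i _ => Finset.sum_congr rfl fun j _ => by ring

lemma fip_sq_le {p : ℕ} (A B : Mat p) : fip A B ^ 2 ≤ fv A * fv B := by
  have := Finset.sum_mul_sq_le_sq_mul_sq (Finset.univ : Finset (Fin p × Fin p))
    (fun k => A k.1 k.2) (fun k => B k.1 k.2)
  simp only [← Finset.univ_product_univ, Finset.sum_product] at this
  simpa [fip, fv, pow_two] using this

lemma fv_add {p : ℕ} (A B : Mat p) : fv (A + B) = fv A + 2 * fip A B + fv B := by
  unfold fv
  rw [fip_add_left, fip_add_right, fip_add_right, fip_comm B A]; ring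

lemma abs_quad_le {p : ℕ} (A : Mat p) (v : Fin p → ℝ) {c : ℝ} (hc : 0 ≤ c) (h : fv A ≤ c ^ 2) :
    |v ⬝ᵥ A *ᵥ v| ≤ c * (v ⬝ᵥ v) := by
  have h1 := fip_sq_le A (vecMulVec v v)
  rw [fip_vec] at h1
  unfold fv at h1 h
  rw [fip_vec_vec] at h1
  have h0 : 0 ≤ v ⬝ᵥ v := Finset.sum_nonneg fun i _ => mul_self_nonneg _
  apply abs_le_of_sq_le_sq _ (by positivity)
  nlinarith [mul_le_mul_of_nonneg_right h (mul_self_nonneg (v ⬝ᵥ v))]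

lemma mulVec_sq_le {p : ℕ} (A : Mat p) (v : Fin p → ℝ) :
    (A *ᵥ v) ⬝ᵥ (A *ᵥ v) ≤ fv A * (v ⬝ᵥ v) := by
  have h1 := fip_sq_le A (vecMulVec (A *ᵥ v) v)
  rw [fip_vec] at h1
  unfold fv at h1
  rw [fip_vec_vec] at h1
  have h0 : 0 ≤ v ⬝ᵥ v := Finset.sum_nonneg fun i _ => mul_self_nonneg _
  have h2 : 0 ≤ (A *ᵥ v) ⬝ᵥ (A *ᵥ v) := Finset.sum_nonneg fun i _ => mul_self_nonneg _
  have h3 := fv_nonneg A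
  unfold fv at *
  rcases h2.eq_or_lt with h | h
  · rw [← h]; positivity
  · nlinarith

lemma core_exact {p : ℕ} (B : Mat p) (hB : B.IsSymm) (s : Fin p → ℝ) (hs : 0 < s ⬝ᵥ s)
    (hV : fv (B - 1) ≤ (1/2) ^ 2) :
    0 < s ⬝ᵥ B *ᵥ s ∧
    fv ((B - 1) + (-(s ⬝ᵥ B *ᵥ s)⁻¹) • vecMulVec (B *ᵥ s) (B *ᵥ s)
      + (s ⬝ᵥ s)⁻¹ • vecMulVec s s) ≤
    fv (B - 1) - (1/3) * ((((B - 1) *ᵥ s) ⬝ᵥ ((B - 1) *ᵥ s)) / (s ⬝ᵥ s)) := by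
  have key : ∀ v : Fin p → ℝ, (1/2) * (v ⬝ᵥ v) ≤ v ⬝ᵥ B *ᵥ v ∧ v ⬝ᵥ B *ᵥ v ≤ (3/2) * (v ⬝ᵥ v) := by
    intro v
    have := abs_le.1 (abs_quad_le (B - 1) v (by norm_num) hV)
    rw [sub_mulVec, one_mulVec, dotProduct_sub] at this
    constructor <;> linarith [this.1, this.2]
  have hsw : ∀ v w : Fin p → ℝ, v ⬝ᵥ B *ᵥ w = (B *ᵥ v) ⬝ᵥ w := by
    intro v w
    rw [dotProduct_mulVec, ← mulVec_transpose, hB.eq]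
  set u := B *ᵥ s with hu
  set σ := s ⬝ᵥ s with hσ
  set β := s ⬝ᵥ u with hβ
  have hub : u ⬝ᵥ s = β := dotProduct_comm _ _
  have hβ0 : 0 < β := by have := (key s).1; linarith
  refine ⟨hβ0, ?_⟩
  set q := u ⬝ᵥ u with hq
  set w := u ⬝ᵥ B *ᵥ u with hw
  have hsBu : s ⬝ᵥ B *ᵥ u = q := by rw [hsw]
  have hE : ((B - 1) *ᵥ s) ⬝ᵥ ((B - 1) *ᵥ s) = q - 2 * β + σ := by
    rw [sub_mulVec, one_mulVec, ← hu]
    simp only [sub_dotProduct, dotProduct_sub, hub, ← hβ, ← hq, ← hσ]; ring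
  have hF : fv ((B - 1) + (-β⁻¹) • vecMulVec u u + σ⁻¹ • vecMulVec s s) =
      fv (B - 1) - (1 - q / β) ^ 2 - 2 * (w / β - (q / β) ^ 2) := by
    rw [fv_add, fv_add]
    unfold fv
    simp only [fip_add_left, fip_smul_left, fip_smul_right]
    simp only [fip_vec_vec, ← hβ, ← hσ, ← hq]
    simp only [fip_vec, sub_mulVec, one_mulVec, dotProduct_sub, ← hu, ← hw, ← hβ, ← hσ, ← hq]
    field_simp
    ring
  rw [hF, hE]
  set a := q / β with ha
  have hqa : q = a * β := by rw [ha]; field_simp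
  set b := w / β with hb
  have hwb : w = b * β := by rw [hb]; field_simp
  have k1 := (key (u - a • s)).1
  have k2 := (key s).2
  rw [← hu, ← hβ, ← hσ] at k2
  simp only [mulVec_sub, mulVec_smul, ← hu, sub_dotProduct, dotProduct_sub, smul_dotProduct, 
    dotProduct_smul, smul_eq_mul, hub, ← hβ, ← hσ, ← hq, ← hw, hsBu] at k1
  have k3 : 0 ≤ (u - (2 * a - 1) • s) ⬝ᵥ (u - (2 * a - 1) • s) :=
    Finset.sum_nonneg fun i _ => mul_self_nonneg _
  simp only [sub_dotProduct, dotProduct_sub, smul_dotProduct, 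
    dotProduct_smul, smul_eq_mul, hub, ← hβ, ← hσ, ← hq] at k3
  rw [hqa, hwb] at k1
  rw [hqa] at k3 ⊢
  have k4 : 0 ≤ b - a ^ 2 := by
    have k5 : 0 ≤ (u - a • s) ⬝ᵥ (u - a • s) := Finset.sum_nonneg fun i _ => mul_self_nonneg _
    simp only [sub_dotProduct, dotProduct_sub, smul_dotProduct, 
      dotProduct_smul, smul_eq_mul, hub, ← hβ, ← hσ, ← hq] at k5
    rw [hqa] at k5
    by_contra hneg
    push Not at hneg
    nlinarith
  have k6 : (a * β - 2 * β + σ) / σ ≤ 3 * ((1 - a) ^ 2 + 2 * (b - a ^ 2)) := by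
    rw [div_le_iff₀ hs]
    have := mul_le_mul_of_nonneg_right k2 k4
    nlinarith [sq_nonneg (1 - a), mul_nonneg hs.le (sq_nonneg (1 - a))]
  linarith

lemma core_pert {p : ℕ} (s y : Fin p → ℝ) (hs : 0 < s ⬝ᵥ s) {η : ℝ} (hη0 : 0 ≤ η) (hη : η ≤ 1/2)
    (he : (y - s) ⬝ᵥ (y - s) ≤ η ^ 2 * (s ⬝ᵥ s)) :
    fv ((y ⬝ᵥ s)⁻¹ • vecMulVec y y + (-(s ⬝ᵥ s)⁻¹) • vecMulVec s s) ≤ (5 * η) ^ 2 := by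
  set σ := s ⬝ᵥ s with hσ
  obtain ⟨e, rfl⟩ : ∃ e, y = s + e := ⟨y - s, by simp⟩
  rw [add_sub_cancel_left] at he
  have hes : e ⬝ᵥ s = s ⬝ᵥ e := dotProduct_comm _ _
  obtain ⟨c, hc⟩ : ∃ c, s ⬝ᵥ e = c * σ := ⟨(s ⬝ᵥ e) / σ, by field_simp⟩
  obtain ⟨d, hd⟩ : ∃ d, e ⬝ᵥ e = d * σ := ⟨(e ⬝ᵥ e) / σ, by field_simp⟩
  have hd0 : 0 ≤ e ⬝ᵥ e := Finset.sum_nonneg fun i _ => mul_self_nonneg _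
  have hcs : (s ⬝ᵥ e) ^ 2 ≤ (s ⬝ᵥ s) * (e ⬝ᵥ e) := by
    have := Finset.sum_mul_sq_le_sq_mul_sq Finset.univ s e
    simpa [dotProduct, pow_two] using this
  rw [hc, hd, ← hσ] at hcs
  rw [hd] at he hd0
  have hd1 : d ≤ η ^ 2 := by nlinarith
  have hd2 : 0 ≤ d := by by_contra h; push Not at h; nlinarith
  have hcd : c ^ 2 ≤ d := by
    have : 0 < σ ^ 2 := by positivity
    by_contra h; push Not at h; nlinarith
  have hc1 := abs_le.1 (abs_le_of_sq_le_sq (hcd.trans hd1) hη0)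
  have hys : (s + e) ⬝ᵥ s = (1 + c) * σ := by rw [add_dotProduct, hes, hc, ← hσ]; ring
  have hsy : s ⬝ᵥ (s + e) = (1 + c) * σ := by rw [dotProduct_comm, hys]
  have hyy : (s + e) ⬝ᵥ (s + e) = (1 + 2 * c + d) * σ := by
    simp only [add_dotProduct, dotProduct_add, hes, hc, hd, ← hσ]; ring
  have hc2 : 1/2 ≤ 1 + c := by linarith [hc1.1]
  have hc3 : (1 + c) ≠ 0 := by linarith
  rw [fv_add]
  unfold fv
  simp only [fip_smul_left, fip_smul_right, fip_vec_vec, hys, hsy, hyy, ← hσ]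
  have : ((1 + c) * σ)⁻¹ * (((1 + c) * σ)⁻¹ * ((1 + 2 * c + d) * σ * ((1 + 2 * c + d) * σ))) +
          2 * (((1 + c) * σ)⁻¹ * (-σ⁻¹ * ((1 + c) * σ * ((1 + c) * σ)))) +
        -σ⁻¹ * (-σ⁻¹ * (σ * σ)) =
      (2 * d * (1 + 2 * c) + d ^ 2 - c ^ 2 * (1 + 2 * c)) / (1 + c) ^ 2 := by
    field_simp
    ring
  have h2 : (2 * d * (1 + 2 * c) + d ^ 2 - c ^ 2 * (1 + 2 * c)) / (1 + c) ^ 2 ≤ (5 * η) ^ 2 := by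
    rw [div_le_iff₀ (by positivity)]
    have e1 : (0:ℝ) ≤ 1 + 2 * c := by linarith
    have e2 : 1 + 2 * c ≤ 2 := by linarith
    have e3 : d ≤ 1/4 := by nlinarith
    have e4 : (1/4 : ℝ) ≤ (1 + c) ^ 2 := by nlinarith
    have e5 := mul_nonneg (sq_nonneg c) e1
    have e6 : d * (1 + 2 * c) ≤ d * 2 := mul_le_mul_of_nonneg_left e2 hd2
    have e7 : d ^ 2 ≤ d * (1/4) := by nlinarith
    have e8 := mul_le_mul_of_nonneg_left e4 (sq_nonneg (5 * η))
    nlinarith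
  linarith [this, h2]

lemma core {p : ℕ} (B : Mat p) (hB : B.IsSymm) (s y : Fin p → ℝ) (hs : 0 < s ⬝ᵥ s)
    (hV : fv (B - 1) ≤ (1/2) ^ 2) {η : ℝ} (hη0 : 0 ≤ η) (hη : η ≤ 1/2)
    (he : (y - s) ⬝ᵥ (y - s) ≤ η ^ 2 * (s ⬝ᵥ s)) :
    fv (B + (y ⬝ᵥ s)⁻¹ • vecMulVec y y - (s ⬝ᵥ B *ᵥ s)⁻¹ • vecMulVec (B *ᵥ s) (B *ᵥ s) - 1) ≤
    fv (B - 1) - (1/3) * ((((B - 1) *ᵥ s) ⬝ᵥ ((B - 1) *ᵥ s)) / (s ⬝ᵥ s)) + 18 * η := by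
  obtain ⟨-, h1⟩ := core_exact B hB s hs hV
  have h2 := core_pert s y hs hη0 hη he
  set A := (B - 1) + (-(s ⬝ᵥ B *ᵥ s)⁻¹) • vecMulVec (B *ᵥ s) (B *ᵥ s)
      + (s ⬝ᵥ s)⁻¹ • vecMulVec s s with hA
  set Q := (y ⬝ᵥ s)⁻¹ • vecMulVec y y + (-(s ⬝ᵥ s)⁻¹) • vecMulVec s s with hQ
  have : B + (y ⬝ᵥ s)⁻¹ • vecMulVec y y - (s ⬝ᵥ B *ᵥ s)⁻¹ • vecMulVec (B *ᵥ s) (B *ᵥ s) - 1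
      = A + Q := by
    rw [hA, hQ, neg_smul, neg_smul]; abel
  rw [this, fv_add]
  have h3 := fip_sq_le A Q
  have h0 : 0 ≤ (((B - 1) *ᵥ s) ⬝ᵥ ((B - 1) *ᵥ s)) / (s ⬝ᵥ s) :=
    div_nonneg (Finset.sum_nonneg fun i _ => mul_self_nonneg _) hs.le
  have hA1 : fv A ≤ (1/2) ^ 2 := by linarith
  have h4 : fip A Q ≤ (1/2) * (5 * η) := by
    have h5 : fip A Q ^ 2 ≤ ((1/2) * (5 * η)) ^ 2 := by
      calc _ ≤ _ := h3
        _ ≤ (1/2) ^ 2 * (5 * η) ^ 2 := mul_le_mul hA1 h2 (fv_nonneg _) (by positivity)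
        _ = _ := by ring
    exact (abs_le.1 (abs_le_of_sq_le_sq h5 (by positivity))).2
  nlinarith

lemma toFn_applyM {p : ℕ} (A : Mat p) (v : Vec p) : toFn (applyM A v) = A *ᵥ toFn v := rfl

lemma norm_sq_dot {p : ℕ} (v : Vec p) : ‖v‖ ^ 2 = toFn v ⬝ᵥ toFn v := by
  rw [EuclideanSpace.real_norm_sq_eq]
  simp [dotProduct, toFn, pow_two]

lemma inner_dot {p : ℕ} (v w : Vec p) : ⟪v, w⟫ = toFn v ⬝ᵥ toFn w := by
  rw [real_inner_comm]
  simp [PiLp.inner_apply, dotProduct, toFn]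

lemma applyM_mul {p : ℕ} (A B : Mat p) (v : Vec p) : applyM (A * B) v = applyM A (applyM B v) := by
  unfold applyM; rw [map_mul]; rfl

lemma applyM_one {p : ℕ} (v : Vec p) : applyM 1 v = v := by
  unfold applyM; rw [map_one]; rfl

lemma applyM_le {p : ℕ} (A : Mat p) (v : Vec p) {K : ℝ} (h : opNorm A ≤ K) :
    ‖applyM A v‖ ≤ K * ‖v‖ :=
  (ContinuousLinearMap.le_opNorm _ _).trans (mul_le_mul_of_nonneg_right h (norm_nonneg _))

lemma applyM_vsub {p : ℕ} (A : Mat p) (v w : Vec p) : applyM A (v - w) = applyM A v - applyM A w :=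
  map_sub _ _ _

lemma applyM_msub {p : ℕ} (A B : Mat p) (v : Vec p) :
    applyM (A - B) v = applyM A v - applyM B v := by
  unfold applyM; rw [map_sub]; rfl

section single
variable {p : ℕ} {M H : Mat p} {K : ℝ}

lemma M_inv_mul (hM : M.PosDef) : M⁻¹ * M = 1 :=
  nonsing_inv_mul _ ((isUnit_iff_isUnit_det _).1 hM.isUnit)

lemma M_mul_inv (hM : M.PosDef) : M * M⁻¹ = 1 :=
  mul_nonsing_inv _ ((isUnit_iff_isUnit_det _).1 hM.isUnit)

lemma M_symm (hM : M.PosDef) : Mᵀ = M := by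
  have := hM.isHermitian.eq
  rwa [conjTranspose_eq_transpose_of_trivial] at this

lemma H_eq (hM : M.PosDef) (hMH : M * H * M = 1) : H = M⁻¹ * M⁻¹ := by
  have h1 := M_inv_mul hM
  have h2 := M_mul_inv hM
  calc H = (M⁻¹ * M) * H * (M * M⁻¹) := by rw [h1, h2]; simp
    _ = M⁻¹ * (M * H * M) * M⁻¹ := by simp only [Matrix.mul_assoc]
    _ = _ := by rw [hMH]; simp

lemma E_eq (hMH : M * H * M = 1) (B : Mat p) : M * (B - H) * M = M * B * M - 1 := by
  rw [Matrix.mul_sub, Matrix.sub_mul, hMH]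

lemma sandwich (hM : M.PosDef) (B : Mat p) : M⁻¹ * (M * B * M) * M⁻¹ = B := by
  have h1 := M_inv_mul hM
  have h2 := M_mul_inv hM
  calc _ = (M⁻¹ * M) * B * (M * M⁻¹) := by simp only [Matrix.mul_assoc]
    _ = _ := by rw [h1, h2]; simp

lemma applyM_fv (A : Mat p) (v : Vec p) {c : ℝ} (hc : 0 ≤ c) (h : fv A ≤ c ^ 2) :
    ‖applyM A v‖ ≤ c * ‖v‖ := by
  refine (sq_le_sq₀ (norm_nonneg _) (by positivity)).1 ?_
  rw [mul_pow, norm_sq_dot, norm_sq_dot, toFn_applyM]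
  refine (mulVec_sq_le A (toFn v)).trans ?_
  rw [← norm_sq_dot]
  gcongr

lemma diff_le (hM : M.PosDef) (hK1 : opNorm M⁻¹ ≤ K) (hK : 0 ≤ K) (B : Mat p) {c : ℝ}
    (hc : 0 ≤ c) (h : fv (M * (B - H) * M) ≤ c ^ 2) (v : Vec p) :
    ‖applyM (B - H) v‖ ≤ K ^ 2 * c * ‖v‖ := by
  rw [← sandwich hM (B - H), applyM_mul, applyM_mul]
  calc _ ≤ K * ‖applyM (M * (B - H) * M) (applyM M⁻¹ v)‖ := applyM_le _ _ hK1
    _ ≤ K * (c * ‖applyM M⁻¹ v‖) := by gcongr; exact applyM_fv _ _ hc h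
    _ ≤ K * (c * (K * ‖v‖)) := by gcongr; exact applyM_le _ _ hK1
    _ = _ := by ring

lemma N_symm (hM : M.PosDef) : (M⁻¹)ᵀ = M⁻¹ := by
  rw [transpose_nonsing_inv, M_symm hM]

lemma norm_le_N (hM : M.PosDef) (hK2 : opNorm M ≤ K) (v : Vec p) :
    ‖v‖ ≤ K * ‖applyM M⁻¹ v‖ := by
  have := applyM_le M (applyM M⁻¹ v) hK2
  rwa [← applyM_mul, M_mul_inv hM, applyM_one] at this

lemma dot_symm {A : Mat p} (hA : Aᵀ = A) (v w : Fin p → ℝ) : v ⬝ᵥ A *ᵥ w = (A *ᵥ v) ⬝ᵥ w := by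
  rw [dotProduct_mulVec, ← mulVec_transpose, hA]

lemma quad_low (hM : M.PosDef) (hMH : M * H * M = 1) (hK2 : opNorm M ≤ K)
    (B : Mat p) (h : fv (M * (B - H) * M) ≤ (1/2) ^ 2) (v : Vec p) :
    ‖v‖ ^ 2 ≤ 2 * K ^ 2 * ⟪v, applyM B v⟫ := by
  rw [E_eq hMH] at h
  have h1 := abs_quad_le _ (toFn (applyM M⁻¹ v)) (by norm_num) h
  have h2 := norm_le_N hM hK2 v
  have h3 : toFn (applyM M⁻¹ v) ⬝ᵥ (M * B * M) *ᵥ toFn (applyM M⁻¹ v) = ⟪v, applyM B v⟫ := by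
    rw [inner_dot, toFn_applyM, toFn_applyM, ← dot_symm (N_symm hM), mulVec_mulVec, mulVec_mulVec,
      sandwich hM]
  rw [sub_mulVec, one_mulVec, dotProduct_sub, h3, ← norm_sq_dot] at h1
  have h4 := (abs_le.1 h1).1
  have h5 : ‖v‖ ^ 2 ≤ (K * ‖applyM M⁻¹ v‖) ^ 2 := by gcongr
  rw [mul_pow] at h5
  have h6 : ‖applyM M⁻¹ v‖ ^ 2 ≤ 2 * ⟪v, applyM B v⟫ := by linarith
  nlinarith [mul_le_mul_of_nonneg_left h6 (sq_nonneg K)]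

lemma bfgs_step (hM : M.PosDef) (hMH : M * H * M = 1) (hK : 1 ≤ K) (hK2 : opNorm M ≤ K)
    (hK1 : opNorm M⁻¹ ≤ K) (B : Mat p) (hB : B.IsSymm)
    (h : fv (M * (B - H) * M) ≤ (1/2) ^ 2) (s y : Vec p) (hs : s ≠ 0) {κ : ℝ} (hκ : 0 ≤ κ)
    (hκ2 : K ^ 2 * κ ≤ 1/2) (hy : ‖y - applyM H s‖ ≤ κ * ‖s‖) :
    fv (M * (bfgsUpdate B s y - H) * M) ≤ fv (M * (B - H) * M)
      - (1/3) * (‖applyM (B - H) s‖ / (K ^ 2 * ‖s‖)) ^ 2 + 18 * (K ^ 2 * κ) := by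
  have hMs := M_symm hM
  have hK0 : 0 < K := by linarith
  have hsn : 0 < ‖s‖ := norm_pos_iff.2 hs
  set σ := applyM M⁻¹ s with hσ
  have hMσ : applyM M σ = s := by rw [hσ, ← applyM_mul, M_mul_inv hM, applyM_one]
  have hσn : ‖s‖ ≤ K * ‖σ‖ := norm_le_N hM hK2 s
  have hσ0 : 0 < ‖σ‖ := by
    by_contra hc
    have : ‖σ‖ = 0 := le_antisymm (not_lt.1 hc) (norm_nonneg _)
    rw [this] at hσn; linarith
  set τ := applyM M y with hτ
  have hsσ : toFn s = M *ᵥ toFn σ := by rw [← hMσ, toFn_applyM]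
  have hτσ : applyM M (y - applyM H s) = τ - σ := by
    rw [applyM_vsub, ← applyM_mul, H_eq hM hMH, ← Matrix.mul_assoc, M_mul_inv hM, Matrix.one_mul]
  have hη : ‖τ - σ‖ ≤ K ^ 2 * κ * ‖σ‖ := by
    rw [← hτσ]
    calc _ ≤ K * ‖y - applyM H s‖ := applyM_le _ _ hK2
      _ ≤ K * (κ * (K * ‖σ‖)) := by
        gcongr; exact hy.trans (by gcongr)
      _ = _ := by ring
  have key := core (M * B * M) (by
      unfold Matrix.IsSymm
      rw [transpose_mul, transpose_mul, hMs, hB.eq, Matrix.mul_assoc]) (toFn σ) (toFn τ)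
      (by rw [← norm_sq_dot]; positivity) (by rwa [E_eq hMH] at h) (by positivity) hκ2
      (by
        have : toFn τ - toFn σ = toFn (τ - σ) := rfl
        rw [this, ← norm_sq_dot, ← norm_sq_dot, ← mul_pow]; gcongr)
  have hupd : M * (bfgsUpdate B s y - H) * M =
      M * B * M + (toFn τ ⬝ᵥ toFn σ)⁻¹ • vecMulVec (toFn τ) (toFn τ) -
        (toFn σ ⬝ᵥ (M * B * M) *ᵥ toFn σ)⁻¹ •
          vecMulVec ((M * B * M) *ᵥ toFn σ) ((M * B * M) *ᵥ toFn σ) - 1 := by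
    rw [E_eq hMH]
    congr 1
    unfold bfgsUpdate
    have e1 : dotV y s = toFn τ ⬝ᵥ toFn σ := by
      rw [dotV, hsσ, dot_symm hMs, ← toFn_applyM]
    have e2 : quadForm B s s = toFn σ ⬝ᵥ (M * B * M) *ᵥ toFn σ := by
      rw [quadForm, hsσ, ← dot_symm hMs, mulVec_mulVec, mulVec_mulVec]
    have e3 : M * outer y y * M = vecMulVec (toFn τ) (toFn τ) := by
      rw [outer, mul_vecMulVec, vecMulVec_mul, ← mulVec_transpose, hMs, ← toFn_applyM]
    have e4 : M * (B * outer s s * B) * M = 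
        vecMulVec ((M * B * M) *ᵥ toFn σ) ((M * B * M) *ᵥ toFn σ) := by
      rw [outer, mul_vecMulVec, vecMulVec_mul, ← mulVec_transpose, hB.eq, mul_vecMulVec,
        vecMulVec_mul, ← mulVec_transpose, hMs, hsσ]
      simp only [mulVec_mulVec, Matrix.mul_assoc]
    rw [Matrix.mul_sub, Matrix.mul_add, Matrix.sub_mul, Matrix.add_mul, Matrix.mul_smul,
      Matrix.mul_smul, Matrix.smul_mul, Matrix.smul_mul, e1, e2, e3, e4]
  rw [hupd]
  have hD : (‖applyM (B - H) s‖ / (K ^ 2 * ‖s‖)) ^ 2 ≤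
      (((M * B * M - 1) *ᵥ toFn σ) ⬝ᵥ ((M * B * M - 1) *ᵥ toFn σ)) / (toFn σ ⬝ᵥ toFn σ) := by
    rw [← toFn_applyM, ← norm_sq_dot, ← norm_sq_dot, ← div_pow]
    refine pow_le_pow_left₀ (by positivity) ?_ 2
    rw [div_le_div_iff₀ (by positivity) hσ0]
    have e1 : ‖applyM (B - H) s‖ ≤ K * ‖applyM (M * B * M - 1) σ‖ := by
      rw [← E_eq hMH, hσ]
      conv_lhs => rw [← sandwich hM (B - H), applyM_mul, applyM_mul]
      exact applyM_le _ _ hK1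
    have e2 : ‖σ‖ ≤ K * ‖s‖ := applyM_le _ _ hK1
    calc _ ≤ (K * ‖applyM (M * B * M - 1) σ‖) * (K * ‖s‖) := by gcongr
      _ = _ := by ring
  rw [E_eq hMH]
  linarith

end single

lemma grad_lip {p n : ℕ} (P : IQNProblem p n) (i : Fin n) {R : ℝ} {x z : Vec p}
    (hx : ‖x - P.xstar‖ ≤ R) (hz : ‖z - P.xstar‖ ≤ R) :
    ‖gradient (P.f i) x - gradient (P.f i) z - applyM (P.Hess i P.xstar) (x - z)‖ ≤
      P.Ltil * R * ‖x - z‖ := by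
  have := (convex_closedBall P.xstar R).norm_image_sub_le_of_norm_hasFDerivWithin_le'
    (f := gradient (P.f i)) (f' := fun u => Matrix.toEuclideanCLM (𝕜 := ℝ) (P.Hess i u))
    (φ := Matrix.toEuclideanCLM (𝕜 := ℝ) (P.Hess i P.xstar)) (C := P.Ltil * R) (x := z) (y := x)
    (fun u _ => (P.hHess i u).hasFDerivWithinAt) (fun u hu => ?_)
    (by simpa [dist_eq_norm] using hz) (by simpa [dist_eq_norm] using hx)
  · exact this
  · have h1 := P.hLip i u P.xstar
    unfold opNorm at h1
    rw [map_sub] at h1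
    refine h1.trans ?_
    have := P.hLtil
    gcongr
    simpa [dist_eq_norm] using hu

lemma sum_grad {p n : ℕ} (P : IQNProblem p n) : ∑ i, gradient (P.f i) P.xstar = 0 := by
  have hn : (n : ℝ) ≠ 0 := by have := P.hn; positivity
  have hd : ∀ i, DifferentiableAt ℝ (P.f i) P.xstar := fun i =>
    ((P.hC2 i).differentiable (by norm_num)).differentiableAt
  have h := P.hopt
  have h1 : HasFDerivAt (fun x => (n : ℝ)⁻¹ * ∑ i, P.f i x)
      ((n : ℝ)⁻¹ • ∑ i, fderiv ℝ (P.f i) P.xstar) P.xstar := by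
    have := HasFDerivAt.fun_sum (u := Finset.univ) (fun i _ => (hd i).hasFDerivAt)
    exact this.const_mul _
  unfold gradient at h ⊢
  rw [h1.fderiv] at h
  rw [map_smul, map_sum, smul_eq_zero] at h
  rcases h with h | h
  · simp [hn] at h
  · exact h

lemma endgame {n : ℕ} (hn : 1 ≤ n) (e : ℕ → ℝ) (he : ∀ t, 0 ≤ e t) {C : ℝ} (hC : ∀ t, e t ≤ C)
    (h : ∀ κ > (0:ℝ), ∃ T, ∀ s ≥ T, ∀ Q A : ℝ, (∀ m, s < m + n → m ≤ s → e m ≤ Q) →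
      (∀ m ≥ s + 1, e m ≤ A) → e (s + 1) ≤ κ * (Q + A) + A / 4) :
    Tendsto (fun t : ℕ => e (t + n) / ((n : ℝ)⁻¹ * ∑ j ∈ Finset.range n, e (t + j)))
      atTop (nhds 0) := by
  have hn0 : (0 : ℝ) < n := by exact_mod_cast hn
  have key : ∀ κ : ℝ, 0 < κ → κ ≤ 1/8 → ∃ T, ∀ t ≥ T,
      e (t + n) ≤ 2 * κ * ∑ j ∈ Finset.range n, e (t + j) := by
    intro κ hκ hκ1
    obtain ⟨T, hT⟩ := h κ hκ
    refine ⟨T, fun t ht => ?_⟩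
    set W := ∑ j ∈ Finset.range n, e (t + j) with hW
    have hW0 : 0 ≤ W := Finset.sum_nonneg fun _ _ => he _
    set A := ⨆ s, e (t + n + s) with hA
    have hbdd : BddAbove (Set.range fun s => e (t + n + s)) := ⟨C, by rintro _ ⟨s, rfl⟩; exact hC _⟩
    have hAle : ∀ m ≥ t + n, e m ≤ A := by
      intro m hm
      have := le_ciSup hbdd (m - (t + n))
      rwa [Nat.add_sub_cancel' hm] at this
    have hWle : ∀ m, t ≤ m → m < t + n → e m ≤ W := by
      intro m h1 h2
      have := Finset.single_le_sum (f := fun j => e (t + j)) (s := Finset.range n)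
        (fun _ _ => he _) (a := m - t) (by simp; omega)
      rwa [Nat.add_sub_cancel' h1] at this
    have hA0 : 0 ≤ A := (he _).trans (hAle _ le_rfl)
    have hAA : A ≤ κ * ((W + A) + A) + A / 4 := by
      apply ciSup_le
      intro s
      have := hT (t + n + s - 1) (by omega) (W + A) A ?_ ?_
      · rwa [show t + n + s - 1 + 1 = t + n + s by omega] at this
      · intro m h1 h2
        by_cases h3 : m < t + n
        · have := hWle m (by omega) h3
          linarith
        · have := hAle m (by omega)
          linarith
      · intro m hm
        exact hAle m (by omega)
    have h2 : A ≤ 2 * κ * W := by nlinarith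
    exact (hAle _ le_rfl).trans h2
  rw [Metric.tendsto_atTop]
  intro η hη
  set κ := min (1/8) (η / (4 * n)) with hκ
  have hκ0 : 0 < κ := lt_min (by norm_num) (by positivity)
  obtain ⟨T, hT⟩ := key κ hκ0 (min_le_left _ _)
  refine ⟨T, fun t ht => ?_⟩
  have h1 := hT t ht
  have hW0 : 0 ≤ ∑ j ∈ Finset.range n, e (t + j) := Finset.sum_nonneg fun _ _ => he _
  rw [Real.dist_eq, sub_zero, abs_of_nonneg (div_nonneg (he _) (by positivity))]
  have h2 : κ ≤ η / (4 * n) := min_le_right _ _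
  have h3 : κ * n ≤ η / 4 := by
    calc κ * n ≤ η / (4 * n) * n := by gcongr
      _ = η / 4 := by field_simp
  refine lt_of_le_of_lt (b := η / 2) ?_ (by linarith)
  apply div_le_of_le_mul₀ (by positivity) (by positivity)
  refine h1.trans ?_
  rw [← mul_assoc]
  apply mul_le_mul_of_nonneg_right _ hW0
  rw [← div_eq_mul_inv, le_div_iff₀ hn0]
  linarith

section comb
variable {p n : ℕ} {P : IQNProblem p n}

lemma exists_cyc (hn : 1 ≤ n) (t : ℕ) (i : Fin n) : ∃ k < n, cyc hn (t + k) = i := by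
  have h1 := Nat.div_add_mod t n
  have h2 : t % n < n := Nat.mod_lt _ hn
  have h3 := i.2
  by_cases h : t % n ≤ i.1
  · refine ⟨i.1 - t % n, by omega, Fin.ext ?_⟩
    show (t + (i.1 - t % n)) % n = i.1
    rw [show t + (i.1 - t % n) = i.1 + n * (t / n) by omega, Nat.add_mul_mod_self_left,
      Nat.mod_eq_of_lt h3]
  · refine ⟨i.1 + n - t % n, by omega, Fin.ext ?_⟩
    show (t + (i.1 + n - t % n)) % n = i.1
    rw [show t + (i.1 + n - t % n) = i.1 + n + n * (t / n) by omega, Nat.add_mul_mod_self_left,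
      Nat.add_mod_right, Nat.mod_eq_of_lt h3]

lemma fixed (S : IQNState P) (i : Fin n) (t k : ℕ) (h : ∀ j < k, cyc P.hn (t + j) ≠ i) :
    S.z i (t + k) = S.z i t ∧ S.B i (t + k) = S.B i t := by
  induction k with
  | zero => simp
  | succ k ih =>
    have h1 := ih fun j hj => h j (by omega)
    have h2 := h k (by omega)
    rw [← add_assoc, S.hzfix _ i h2.symm, S.hBfix _ i h2.symm]
    exact h1

lemma exists_next (S : IQNState P) (i : Fin n) (t : ℕ) :
    ∃ k, cyc P.hn (t + k) = i ∧ S.z i (t + k) = S.z i t ∧ S.B i (t + k) = S.B i t := by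
  have hex : ∃ k, cyc P.hn (t + k) = i := by
    obtain ⟨k, -, hk⟩ := exists_cyc P.hn t i
    exact ⟨k, hk⟩
  classical
  exact ⟨Nat.find hex, Nat.find_spec hex, fixed S i t _ fun j hj => Nat.find_min hex hj⟩

lemma z_eq (S : IQNState P) (i : Fin n) (t : ℕ) : ∃ m ≤ t, t < m + n ∧ S.z i t = S.x m := by
  have : ∃ m ≤ t, S.z i t = S.x m ∧ ∀ j, m ≤ j → j < t → cyc P.hn j ≠ i := by
    induction t with
    | zero => exact ⟨0, le_rfl, S.hz0 i, fun j _ h => by omega⟩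
    | succ t ih =>
      obtain ⟨m, hm, hz, hj⟩ := ih
      by_cases h : cyc P.hn t = i
      · refine ⟨t + 1, le_rfl, ?_, fun j h1 h2 => by omega⟩
        rw [← h]; exact S.hzupd t
      · refine ⟨m, by omega, ?_, fun j h1 h2 => ?_⟩
        · rw [S.hzfix t i (Ne.symm h), hz]
        · rcases Nat.lt_succ_iff_lt_or_eq.1 h2 with h3 | h3
          · exact hj j h1 h3
          · rw [h3]; exact h
  obtain ⟨m, hm, hz, hj⟩ := this
  refine ⟨m, hm, ?_, hz⟩
  by_contra hlt
  obtain ⟨k, hk, hk2⟩ := exists_cyc P.hn m i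
  exact hj (m + k) (by omega) (by omega) hk2

end comb

lemma applyM_avg {p n : ℕ} (c : ℝ) (B : Fin n → Mat p) (v : Vec p) :
    applyM (c • ∑ i, B i) v = c • ∑ i, applyM (B i) v := by
  unfold applyM
  rw [map_smul, map_sum]
  simp

section main
variable {p n : ℕ} {P : IQNProblem p n} {M : Fin n → Mat p} {K : ℝ}

/-- The potential. -/
def pot (M : Fin n → Mat p) (S : IQNState P) (i : Fin n) (t : ℕ) : ℝ :=
  fv (M i * (S.B i t - P.Hess i P.xstar) * M i)

lemma recursion (hM : ∀ i, (M i).PosDef ∧ M i * P.Hess i P.xstar * M i = 1)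
    (hK2 : ∀ i, opNorm (M i) ≤ K) (S : IQNState P) (t : ℕ)
    (hV : ∀ i, pot M S i t ≤ (1/2) ^ 2) :
    ‖S.x (t+1) - P.xstar‖ ≤ 2 * K ^ 2 * ((n : ℝ)⁻¹ * ∑ i,
      (‖applyM (S.B i t - P.Hess i P.xstar) (S.z i t - P.xstar)‖
        + P.Ltil * ‖S.z i t - P.xstar‖ ^ 2)) := by
  have hn0 : (0 : ℝ) < n := by exact_mod_cast P.hn
  set w := S.x (t+1) - P.xstar with hw
  set Bb := (n : ℝ)⁻¹ • ∑ i, S.B i t with hBb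
  have h1 : applyM Bb (S.x (t+1)) = (n : ℝ)⁻¹ • ∑ i, applyM (S.B i t) (S.z i t)
      - (n : ℝ)⁻¹ • ∑ i, gradient (P.f i) (S.z i t) := by
    rw [S.hx t, ← applyM_mul, mul_nonsing_inv _ ((isUnit_iff_isUnit_det _).1 (S.hinv t)),
      applyM_one]
  have h2 : applyM Bb w = (n : ℝ)⁻¹ • ∑ i,
      (applyM (S.B i t - P.Hess i P.xstar) (S.z i t - P.xstar) -
      (gradient (P.f i) (S.z i t) - gradient (P.f i) P.xstar
        - applyM (P.Hess i P.xstar) (S.z i t - P.xstar))) := by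
    rw [hw, applyM_vsub, h1, hBb, applyM_avg, ← smul_sub, ← smul_sub]
    congr 1
    have h0 := sum_grad P
    have : ∀ i, applyM (S.B i t - P.Hess i P.xstar) (S.z i t - P.xstar) -
      (gradient (P.f i) (S.z i t) - gradient (P.f i) P.xstar
        - applyM (P.Hess i P.xstar) (S.z i t - P.xstar)) =
      applyM (S.B i t) (S.z i t) - gradient (P.f i) (S.z i t) - applyM (S.B i t) P.xstar
        + gradient (P.f i) P.xstar := by
      intro i
      simp only [applyM_msub, applyM_vsub]
      abel
    simp only [this, Finset.sum_add_distrib, Finset.sum_sub_distrib, h0, add_zero]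
  have h3 : ‖applyM Bb w‖ ≤ (n : ℝ)⁻¹ * ∑ i,
      (‖applyM (S.B i t - P.Hess i P.xstar) (S.z i t - P.xstar)‖
        + P.Ltil * ‖S.z i t - P.xstar‖ ^ 2) := by
    rw [h2, norm_smul, Real.norm_of_nonneg (by positivity)]
    gcongr
    refine (norm_sum_le _ _).trans (Finset.sum_le_sum fun i _ => ?_)
    refine (norm_sub_le _ _).trans ?_
    gcongr
    have := grad_lip P i (R := ‖S.z i t - P.xstar‖) (x := S.z i t) (z := P.xstar) le_rfl (by simp)
    rwa [mul_assoc, ← pow_two] at this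
  refine le_trans ?_ (mul_le_mul_of_nonneg_left h3 (by positivity))
  have h4 : ‖w‖ ^ 2 ≤ 2 * K ^ 2 * ⟪w, applyM Bb w⟫ := by
    rw [hBb, applyM_avg, inner_smul_right, inner_sum]
    have : ∑ i : Fin n, ‖w‖ ^ 2 ≤ ∑ i, 2 * K ^ 2 * ⟪w, applyM (S.B i t) w⟫ :=
      Finset.sum_le_sum fun i _ => quad_low (hM i).1 (hM i).2 (hK2 i) _ (hV i) w
    rw [← Finset.mul_sum] at this
    simp only [Finset.sum_const, Finset.card_univ, Fintype.card_fin, nsmul_eq_mul] at this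
    rw [mul_left_comm, ← div_eq_inv_mul, le_div_iff₀ hn0]
    linarith
  have h5 := real_inner_le_norm w (applyM Bb w)
  rcases (norm_nonneg w).eq_or_lt with h | h
  · rw [← h]; positivity
  · have := h4.trans (mul_le_mul_of_nonneg_left h5 (by positivity))
    by_contra hc
    push Not at hc
    nlinarith

lemma zbound (S : IQNState P) {ε r : ℝ} (hε : 0 ≤ ε) (hr0 : 0 ≤ r) (hr1 : r ≤ 1) (hr : 1/2 ≤ r ^ n) (t : ℕ)
    (he : ∀ s ≤ t, ‖S.x s - P.xstar‖ ≤ ε * r ^ s) (i : Fin n) :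
    ‖S.z i t - P.xstar‖ ≤ 2 * ε * r ^ (t + 1) ∧ ‖S.z i t - P.xstar‖ ≤ ε := by
  obtain ⟨m, hm, hm2, hz⟩ := z_eq S i t
  rw [hz]
  have h1 := he m hm
  have h2 : r ^ (m + n) ≤ r ^ (t + 1) := pow_le_pow_of_le_one hr0 hr1 hm2
  rw [pow_add] at h2
  have h3 : 0 ≤ r ^ m := by positivity
  have h4 : r ^ m ≤ 1 := pow_le_one₀ hr0 hr1
  constructor
  · have : r ^ m ≤ 2 * r ^ (t + 1) := by nlinarith
    nlinarith
  · nlinarith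

/-- Size of the secant error. -/
def Gq (S : IQNState P) (t : ℕ) : ℝ :=
  ‖applyM (S.B (cyc P.hn t) t - P.Hess (cyc P.hn t) P.xstar)
    (S.z (cyc P.hn t) (t+1) - S.z (cyc P.hn t) t)‖ /
    ‖S.z (cyc P.hn t) (t+1) - S.z (cyc P.hn t) t‖

lemma stepV (hM : ∀ i, (M i).PosDef ∧ M i * P.Hess i P.xstar * M i = 1)
    (hK : 1 ≤ K) (hK2 : ∀ i, opNorm (M i) ≤ K) (hK1 : ∀ i, opNorm (M i)⁻¹ ≤ K)
    (S : IQNState P) {ε r : ℝ} (hε : 0 ≤ ε) (hr0 : 0 ≤ r) (hr1 : r ≤ 1) (hr : 1/2 ≤ r ^ n)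
    (hεL : 2 * K ^ 2 * P.Ltil * ε ≤ 1/4) (t : ℕ)
    (he : ∀ s ≤ t + 1, ‖S.x s - P.xstar‖ ≤ ε * r ^ s)
    (hV : ∀ i, pot M S i t ≤ (1/2) ^ 2) :
    pot M S (cyc P.hn t) (t + 1) ≤ pot M S (cyc P.hn t) t
      - (1/3) * (Gq S t / K ^ 2) ^ 2 + 36 * K ^ 2 * P.Ltil * ε * r ^ t := by
  have hL := P.hLtil
  set i := cyc P.hn t with hi
  have h1 := (zbound S hε hr0 hr1 hr t (fun s hs => he s (by omega)) i).1
  have hrt : r ^ (t + 1) ≤ r ^ t := pow_le_pow_of_le_one hr0 hr1 (Nat.le_succ t)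
  have hrt0 : 0 ≤ r ^ t := by positivity
  have hrt1 : r ^ t ≤ 1 := pow_le_one₀ hr0 hr1
  have h2 : ‖S.z i t - P.xstar‖ ≤ 2 * ε * r ^ t := h1.trans (by gcongr)
  have h3 : ‖S.z i (t+1) - P.xstar‖ ≤ 2 * ε * r ^ t := by
    rw [hi, S.hzupd t]
    refine (he (t+1) le_rfl).trans ?_
    nlinarith [mul_nonneg hε hrt0, mul_le_mul_of_nonneg_left hrt hε]
  have h4 := grad_lip P i h3 h2
  have hb := bfgs_step (hM i).1 (hM i).2 hK (hK2 i) (hK1 i) (S.B i t) (S.hsym i t) (hV i)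
    _ _ (S.hs t) (κ := P.Ltil * (2 * ε * r ^ t)) (by positivity) (by
      have : 2 * K ^ 2 * P.Ltil * ε * r ^ t ≤ 1/4 * 1 := by gcongr
      linarith) h4
  unfold pot
  rw [hi, S.hBupd t, ← hi]
  refine hb.trans (le_of_eq ?_)
  have : ‖applyM (S.B i t - P.Hess i P.xstar) (S.z i (t + 1) - S.z i t)‖ /
      (K ^ 2 * ‖S.z i (t + 1) - S.z i t‖) = Gq S t / K ^ 2 := by
    unfold Gq
    rw [← hi, div_div, mul_comm (K ^ 2)]
  rw [this]
  ring

lemma sum_r_le {n : ℕ} (hn : 1 ≤ n) (t : ℕ) :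
    ∑ s ∈ Finset.range t, (1 - 1 / (2 * n) : ℝ) ^ s ≤ 2 * n := by
  have hn0 : (1 : ℝ) ≤ n := by exact_mod_cast hn
  have hle : 1 / (2 * n : ℝ) ≤ 1 := by rw [div_le_one (by positivity)]; linarith
  have hpos : 0 < 1 / (2 * n : ℝ) := by positivity
  have h := geom_sum_mul_neg (1 - 1 / (2 * n) : ℝ) t
  have h2 : (0:ℝ) ≤ (1 - 1 / (2 * n) : ℝ) ^ t := pow_nonneg (by linarith) _
  rw [sub_sub_cancel] at h
  have h3 : (∑ s ∈ Finset.range t, (1 - 1 / (2 * n) : ℝ) ^ s) * (1 / (2 * n)) ≤ 1 := by linarith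
  rw [mul_one_div, div_le_one (by positivity)] at h3
  exact h3

lemma r_pow {n : ℕ} (hn : 1 ≤ n) : 1/2 ≤ (1 - 1 / (2 * n) : ℝ) ^ n := by
  have hn0 : (1 : ℝ) ≤ n := by exact_mod_cast hn
  have hle : 1 / (2 * n : ℝ) ≤ 1 := by rw [div_le_one (by positivity)]; linarith
  have := one_add_mul_le_pow (a := -(1 / (2 * n) : ℝ)) (by linarith) n
  rw [← sub_eq_add_neg] at this
  refine le_trans (le_of_eq ?_) this
  field_simp
  norm_num

lemma invariant (hM : ∀ i, (M i).PosDef ∧ M i * P.Hess i P.xstar * M i = 1)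
    (hK : 1 ≤ K) (hK2 : ∀ i, opNorm (M i) ≤ K) (hK1 : ∀ i, opNorm (M i)⁻¹ ≤ K)
    (S : IQNState P) {ε r φ δ : ℝ} (hε : 0 ≤ ε) (hrd : r = 1 - 1 / (2 * n))
    (hr0 : 0 ≤ r) (hr1 : r ≤ 1)
    (hφ0 : 0 ≤ φ) (hφ : φ ≤ 1/2) (hφK : 2 * K ^ 4 * φ ≤ 1/4)
    (hεL : 2 * K ^ 2 * P.Ltil * ε ≤ 1/4) (hδ : δ ^ 2 + 36 * K ^ 2 * P.Ltil * ε * (2 * n) ≤ φ ^ 2)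
    (h0 : ‖S.x 0 - P.xstar‖ ≤ ε) (hV0 : ∀ i, pot M S i 0 ≤ δ ^ 2) (t : ℕ) :
    (∀ s ≤ t, ‖S.x s - P.xstar‖ ≤ ε * r ^ s) ∧
    (∀ i, pot M S i t ≤ δ ^ 2 + 36 * K ^ 2 * P.Ltil * ε * ∑ s ∈ Finset.range t, r ^ s) := by
  have hL := P.hLtil
  have hr : 1/2 ≤ r ^ n := by rw [hrd]; exact r_pow P.hn
  have hn0 : (0 : ℝ) < n := by exact_mod_cast P.hn
  induction t with
  | zero =>
    constructor
    · intro s hs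
      obtain rfl : s = 0 := by omega
      simpa using h0
    · simpa using hV0
  | succ t ih =>
    obtain ⟨ih1, ih2⟩ := ih
    have hVφ : ∀ i, pot M S i t ≤ φ ^ 2 := by
      intro i
      refine (ih2 i).trans (le_trans ?_ hδ)
      have := sum_r_le P.hn t
      rw [← hrd] at this
      gcongr
    have hV : ∀ i, pot M S i t ≤ (1/2) ^ 2 := fun i => (hVφ i).trans (by gcongr)
    have he : ∀ s ≤ t + 1, ‖S.x s - P.xstar‖ ≤ ε * r ^ s := by
      intro s hs
      rcases Nat.le_succ_iff.1 hs with h | h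
      · exact ih1 s h
      · rw [h]
        refine (recursion hM hK2 S t hV).trans ?_
        have hz := zbound S hε hr0 hr1 hr t ih1
        have hsum : ∑ i, (‖applyM (S.B i t - P.Hess i P.xstar) (S.z i t - P.xstar)‖
            + P.Ltil * ‖S.z i t - P.xstar‖ ^ 2) ≤
            ∑ i : Fin n, (K ^ 2 * φ + P.Ltil * ε) * (2 * ε * r ^ (t + 1)) := by
          refine Finset.sum_le_sum fun i _ => ?_
          have e1 := diff_le (hM i).1 (hK1 i) (by linarith) (S.B i t) hφ0 (hVφ i)
            (S.z i t - P.xstar)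
          have e2 : P.Ltil * ‖S.z i t - P.xstar‖ ^ 2 ≤ P.Ltil * ε * ‖S.z i t - P.xstar‖ := by
            rw [pow_two, ← mul_assoc]
            gcongr
            exact (hz i).2
          calc _ ≤ (K ^ 2 * φ + P.Ltil * ε) * ‖S.z i t - P.xstar‖ := by linarith
            _ ≤ _ := by gcongr; exact (hz i).1
        rw [Finset.sum_const, Finset.card_univ, Fintype.card_fin, nsmul_eq_mul] at hsum
        calc _ ≤ 2 * K ^ 2 * ((n : ℝ)⁻¹ * (n * ((K ^ 2 * φ + P.Ltil * ε) * (2 * ε * r ^ (t + 1))))) := by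
              gcongr
          _ = (2 * K ^ 4 * φ + 2 * K ^ 2 * P.Ltil * ε) * (2 * ε * r ^ (t + 1)) := by
              field_simp
          _ ≤ (1/4 + 1/4) * (2 * ε * r ^ (t + 1)) := by gcongr
          _ = ε * r ^ (t + 1) := by ring
    refine ⟨he, fun i => ?_⟩
    rw [Finset.sum_range_succ, mul_add, ← add_assoc]
    by_cases hi : i = cyc P.hn t
    · have := stepV hM hK hK2 hK1 S hε hr0 hr1 hr hεL t he hV
      rw [← hi] at this
      have h5 := sq_nonneg (Gq S t / K ^ 2)
      linarith [ih2 i]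
    · have : pot M S i (t + 1) = pot M S i t := by
        unfold pot; rw [S.hBfix t i hi]
      rw [this]
      have : 0 ≤ 36 * K ^ 2 * P.Ltil * ε * r ^ t := by positivity
      linarith [ih2 i]

lemma Gq_tendsto (hK : 1 ≤ K) (S : IQNState P) {c r : ℝ} (hrd : r = 1 - 1 / (2 * n)) (hc : 0 ≤ c)
    (hstep : ∀ t, pot M S (cyc P.hn t) (t + 1) ≤ pot M S (cyc P.hn t) t
      - (1/3) * (Gq S t / K ^ 2) ^ 2 + c * r ^ t) : Tendsto (Gq S) atTop (nhds 0) := by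
  have hU : ∀ t, ∑ i, pot M S i (t + 1) ≤ ∑ i, pot M S i t
      - (1/3) * (Gq S t / K ^ 2) ^ 2 + c * r ^ t := by
    intro t
    have h1 := hstep t
    have h2 : ∑ i ∈ Finset.univ.erase (cyc P.hn t), pot M S i (t + 1) =
        ∑ i ∈ Finset.univ.erase (cyc P.hn t), pot M S i t := by
      refine Finset.sum_congr rfl fun i hi => ?_
      unfold pot; rw [S.hBfix t i (Finset.ne_of_mem_erase hi)]
    rw [← Finset.add_sum_erase _ _ (Finset.mem_univ (cyc P.hn t)), h2,
      ← Finset.add_sum_erase _ (fun i => pot M S i t) (Finset.mem_univ (cyc P.hn t))]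
    linarith
  have hsum : ∀ t, ∑ s ∈ Finset.range t, (1/3) * (Gq S s / K ^ 2) ^ 2 + ∑ i, pot M S i t ≤
      ∑ i, pot M S i 0 + c * ∑ s ∈ Finset.range t, r ^ s := by
    intro t
    induction t with
    | zero => simp
    | succ t ih =>
      rw [Finset.sum_range_succ, Finset.sum_range_succ, mul_add]
      linarith [hU t]
  have hS : Summable fun s => (1/3) * (Gq S s / K ^ 2) ^ 2 := by
    refine summable_of_sum_range_le (c := ∑ i, pot M S i 0 + c * (2 * n)) (fun s => by positivity)
      fun t => ?_
    have h1 := hsum t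
    have h2 := sum_r_le P.hn t
    rw [← hrd] at h2
    have h3 : 0 ≤ ∑ i, pot M S i t := Finset.sum_nonneg fun i _ => fv_nonneg _
    have h4 := mul_le_mul_of_nonneg_left h2 hc
    linarith
  have h1 := (hS.tendsto_atTop_zero.const_mul (3 * K ^ 4)).sqrt
  simp only [mul_zero, Real.sqrt_zero] at h1
  refine h1.congr fun t => ?_
  have hK0 : K ≠ 0 := by linarith
  have : 3 * K ^ 4 * (1 / 3 * (Gq S t / K ^ 2) ^ 2) = Gq S t ^ 2 := by field_simp
  rw [this, Real.sqrt_sq]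
  unfold Gq; positivity

lemma final_rec (hM : ∀ i, (M i).PosDef ∧ M i * P.Hess i P.xstar * M i = 1)
    (hK : 1 ≤ K) (hK2 : ∀ i, opNorm (M i) ≤ K) (hK1 : ∀ i, opNorm (M i)⁻¹ ≤ K)
    (S : IQNState P) {φ : ℝ}
    (hφ0 : 0 ≤ φ) (hφ : φ ≤ 1/2) (hφK : 2 * K ^ 4 * φ ≤ 1/4)
    (hV : ∀ i t, pot M S i t ≤ φ ^ 2) (hG : Tendsto (Gq S) atTop (nhds 0))
    (he : Tendsto (fun t => ‖S.x t - P.xstar‖) atTop (nhds 0)) :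
    ∀ κ > (0:ℝ), ∃ T, ∀ s ≥ T, ∀ Q A : ℝ,
      (∀ m, s < m + n → m ≤ s → ‖S.x m - P.xstar‖ ≤ Q) →
      (∀ m ≥ s + 1, ‖S.x m - P.xstar‖ ≤ A) → ‖S.x (s + 1) - P.xstar‖ ≤ κ * (Q + A) + A / 4 := by
  intro κ hκ
  have hL := P.hLtil
  have hK0 : 0 < K := by linarith
  have hn0 : (0 : ℝ) < n := by exact_mod_cast P.hn
  set κ' := κ / (2 * K ^ 2 * (1 + P.Ltil)) with hκ'
  have hκ0 : 0 < κ' := by positivity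
  obtain ⟨T1, hT1⟩ := eventually_atTop.1 (hG.eventually_le_const hκ0)
  obtain ⟨T2, hT2⟩ := eventually_atTop.1 (he.eventually_le_const hκ0)
  refine ⟨T1 + T2 + n, fun s hs Q A hQ hA => ?_⟩
  have hA0 : 0 ≤ A := (norm_nonneg _).trans (hA _ le_rfl)
  have hQ0 : 0 ≤ Q := (norm_nonneg _).trans (hQ s (by have := P.hn; omega) le_rfl)
  refine (recursion hM hK2 S s fun i => (hV i s).trans (by gcongr)).trans ?_
  have hsum : ∑ i, (‖applyM (S.B i s - P.Hess i P.xstar) (S.z i s - P.xstar)‖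
            + P.Ltil * ‖S.z i s - P.xstar‖ ^ 2) ≤
      ∑ i : Fin n, (K ^ 2 * φ * A + κ' * (Q + A) + P.Ltil * κ' * Q) := by
    refine Finset.sum_le_sum fun i _ => ?_
    obtain ⟨m, hm, hm2, hz⟩ := z_eq S i s
    have hzQ : ‖S.z i s - P.xstar‖ ≤ Q := by rw [hz]; exact hQ m hm2 hm
    have hzκ : ‖S.z i s - P.xstar‖ ≤ κ' := by rw [hz]; exact hT2 m (by omega)
    have e1 : P.Ltil * ‖S.z i s - P.xstar‖ ^ 2 ≤ P.Ltil * κ' * Q := by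
      rw [pow_two, mul_assoc]; gcongr
    obtain ⟨k, hk, hkz, hkB⟩ := exists_next S i s
    have hg := hT1 (s + k) (by omega)
    have hs0 := norm_pos_iff.2 (S.hs (s + k))
    have hup := S.hzupd (s + k)
    unfold Gq at hg
    rw [hk] at hg hs0 hup
    rw [div_le_iff₀ hs0, hup, hkz, hkB] at hg
    have hxA : ‖S.x (s + k + 1) - P.xstar‖ ≤ A := hA _ (by omega)
    have e2 := diff_le (hM i).1 (hK1 i) hK0.le (S.B i s) hφ0 (hV i s)
      (S.x (s + k + 1) - P.xstar)
    have e3 : S.z i s - P.xstar = (S.x (s + k + 1) - P.xstar) - (S.x (s + k + 1) - S.z i s) := by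
      abel
    have e4 : ‖S.x (s + k + 1) - S.z i s‖ ≤ Q + A := by
      rw [← sub_sub_sub_cancel_right _ _ P.xstar]
      exact (norm_sub_le _ _).trans (by linarith)
    have e5 : ‖applyM (S.B i s - P.Hess i P.xstar) (S.z i s - P.xstar)‖ ≤
        K ^ 2 * φ * A + κ' * (Q + A) := by
      rw [e3, applyM_vsub]
      refine (norm_sub_le _ _).trans (add_le_add (e2.trans (by gcongr)) (hg.trans (by gcongr)))
    linarith
  rw [Finset.sum_const, Finset.card_univ, Fintype.card_fin, nsmul_eq_mul] at hsum
  calc _ ≤ 2 * K ^ 2 * ((n : ℝ)⁻¹ * (n * (K ^ 2 * φ * A + κ' * (Q + A) + P.Ltil * κ' * Q))) := by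
        gcongr
    _ = 2 * K ^ 4 * φ * A + 2 * K ^ 2 * κ' * ((Q + A) + P.Ltil * Q) := by
        field_simp; ring
    _ ≤ 1/4 * A + 2 * K ^ 2 * κ' * ((1 + P.Ltil) * (Q + A)) := by
        gcongr
        nlinarith [mul_nonneg hL.le hA0]
    _ = κ * (Q + A) + A / 4 := by
        rw [hκ']; field_simp; ring

end main

/-- Theorem 1 of the paper: locally, the IQN residuals are
mean-superlinearly convergent:
`‖x^t − x*‖ / [(1/n)(‖x^{t−1} − x*‖ + … + ‖x^{t−n} − x*‖)] → 0`
(the limit taken over `t ≥ n`; below `t` is shifted by `n`). -/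
theorem stmt8 {p n : ℕ} (P : IQNProblem p n) (M : Fin n → Mat p)
    (hM : ∀ i, (M i).PosDef ∧ M i * P.Hess i P.xstar * M i = 1) :
    ∃ ε > (0:ℝ), ∃ δ > (0:ℝ), ∀ S : IQNState P,
      (∀ t, S.x t ≠ P.xstar) →
      ‖S.x 0 - P.xstar‖ < ε →
      (∀ i, wNorm (M i) (S.B i 0 - P.Hess i P.xstar) < δ) →
      Tendsto (fun t : ℕ =>
          ‖S.x (t + n) - P.xstar‖ /
            ((n : ℝ)⁻¹ * ∑ j ∈ Finset.range n, ‖S.x (t + j) - P.xstar‖))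
        atTop (nhds 0) := by
  have hn1 : (1 : ℝ) ≤ n := by exact_mod_cast P.hn
  have hL := P.hLtil
  have hop : ∀ A : Mat p, 0 ≤ opNorm A := fun A => norm_nonneg _
  obtain ⟨K, hK, hK2, hK1⟩ : ∃ K : ℝ, 1 ≤ K ∧ (∀ i, opNorm (M i) ≤ K) ∧
      ∀ i, opNorm (M i)⁻¹ ≤ K := by
    have h1 : ∀ i, opNorm (M i) + opNorm (M i)⁻¹ ≤ ∑ i, (opNorm (M i) + opNorm (M i)⁻¹) := fun i =>
      Finset.single_le_sum (f := fun i => opNorm (M i) + opNorm (M i)⁻¹)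
        (fun i _ => add_nonneg (hop _) (hop _)) (Finset.mem_univ i)
    refine ⟨1 + ∑ i, (opNorm (M i) + opNorm (M i)⁻¹), ?_, fun i => ?_, fun i => ?_⟩
    · have : 0 ≤ ∑ i, (opNorm (M i) + opNorm (M i)⁻¹) :=
        Finset.sum_nonneg fun i _ => add_nonneg (hop _) (hop _)
      linarith
    · linarith [h1 i, hop (M i)⁻¹]
    · linarith [h1 i, hop (M i)]
  have hK0 : 0 < K := by linarith
  set φ : ℝ := 1 / (8 * K ^ 4) with hφd
  have hφ0 : 0 < φ := by positivity
  have hφK : 2 * K ^ 4 * φ ≤ 1/4 := by rw [hφd]; apply le_of_eq; field_simp; norm_num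
  have hφ : φ ≤ 1/8 := by
    have : (1:ℝ) ≤ K ^ 4 := one_le_pow₀ hK
    nlinarith
  set ε : ℝ := φ ^ 2 / (144 * n * K ^ 2 * P.Ltil) with hεd
  have hε0 : 0 < ε := by positivity
  have hεe : 144 * n * (K ^ 2 * P.Ltil * ε) = φ ^ 2 := by rw [hεd]; field_simp
  have hpos : 0 < K ^ 2 * P.Ltil * ε := by positivity
  have hεL : 2 * K ^ 2 * P.Ltil * ε ≤ 1/4 := by
    have : 1 * (K ^ 2 * P.Ltil * ε) ≤ n * (K ^ 2 * P.Ltil * ε) := by gcongr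
    nlinarith
  refine ⟨ε, hε0, φ / 2, by positivity, fun S _ hx0 hB0 => ?_⟩
  set r : ℝ := 1 - 1 / (2 * n) with hrd
  have hr0 : 0 ≤ r := by
    have : 1 / (2 * n : ℝ) ≤ 1 := by rw [div_le_one (by positivity)]; linarith
    linarith
  have hr1 : r < 1 := by
    have : 0 < 1 / (2 * n : ℝ) := by positivity
    linarith
  have hδ : (φ / 2) ^ 2 + 36 * K ^ 2 * P.Ltil * ε * (2 * n) ≤ φ ^ 2 := by
    nlinarith [sq_nonneg φ]
  have hV0 : ∀ i, pot M S i 0 ≤ (φ / 2) ^ 2 := by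
    intro i
    have h := hB0 i
    unfold wNorm frobNorm at h
    rw [Real.sqrt_lt' (by positivity)] at h
    unfold pot fv fip
    simp only [← pow_two]
    exact h.le
  have hinv := invariant hM hK hK2 hK1 S hε0.le hrd hr0 hr1.le hφ0.le (by linarith) hφK hεL hδ
    hx0.le hV0
  have hV : ∀ i t, pot M S i t ≤ φ ^ 2 := by
    intro i t
    refine ((hinv t).2 i).trans (le_trans ?_ hδ)
    have := sum_r_le P.hn t
    rw [← hrd] at this
    gcongr
  have hex : ∀ t, ‖S.x t - P.xstar‖ ≤ ε * r ^ t := fun t => (hinv t).1 t le_rfl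
  have hG : Tendsto (Gq S) atTop (nhds 0) := by
    refine Gq_tendsto (M := M) hK S hrd (c := 36 * K ^ 2 * P.Ltil * ε) (by positivity) fun t => ?_
    exact stepV hM hK hK2 hK1 S hε0.le hr0 hr1.le (r_pow P.hn) hεL t (fun s _ => hex s)
      fun i => (hV i t).trans (by gcongr; linarith)
  have he : Tendsto (fun t => ‖S.x t - P.xstar‖) atTop (nhds 0) := by
    refine squeeze_zero (fun _ => norm_nonneg _) hex ?_
    simpa using (tendsto_pow_atTop_nhds_zero_of_lt_one hr0 hr1).const_mul ε
  refine endgame P.hn (fun t => ‖S.x t - P.xstar‖) (fun _ => norm_nonneg _) (C := ε) (fun t => ?_)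
    (final_rec hM hK hK2 hK1 S hφ0.le (by linarith) hφK hV hG he)
  exact (hex t).trans (mul_le_of_le_one_right hε0.le (pow_le_one₀ hr0 hr1.le))

end
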